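/- Let (sⱼⁱ) be an invertible real 3×3 matrix, let Δⱼⁱ be the 2×2 minor determinant obtained by deleting the i-th row and j-th column of (sⱼⁱ), and define Φ on the open set O ⊆ ℝ³ of points (t,x,v) where the two denominators s₁³t+s₂³x+s₃³ and (−Δ₃²t+Δ₁²)v+(Δ₃²x+Δ₂²) are nonzero, by Φ(t,x,v) = ( (s₁¹t+s₂¹x+s₃¹)/(s₁³t+s₂³x+s₃³), (s₁²t+s₂²x+s₃²)/(s₁³t+s₂³x+s₃³), ((−Δ₃¹t+Δ₁¹)v+(Δ₃¹x+Δ₂¹)) / ((−Δ₃²t+Δ₁²)v+(Δ₃²x+Δ₂²)) ). If D, D′ ⊆ ℝ² are open, u : D → ℝ is a C¹ solution of ∂u/∂t + u·∂u/∂x = 0 whose graph is contained in O, and ũ : D′ → ℝ is a C¹ function with Φ({(t,x,u(t,x)) : (t,x) ∈ D}) = {(t,x,ũ(t,x)) : (t,x) ∈ D′}, then ũ satisfies ∂ũ/∂t + ũ·∂ũ/∂x = 0 on D′. -/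

import Mathlib

theorem burgers_partials (u : ℝ × ℝ → ℝ) (p : ℝ × ℝ) (h : DifferentiableAt ℝ u p) (a b : ℝ) :
    fderiv ℝ u p (a, b) = a * deriv (fun t => u (t, p.2)) p.1
      + b * deriv (fun x => u (p.1, x)) p.2 := by
  have h1 : HasDerivAt (fun t => u (t, p.2)) (fderiv ℝ u p (1, 0)) p.1 :=
    HasFDerivAt.comp_hasDerivAt (f := fun t : ℝ => (t, p.2)) p.1 h.hasFDerivAt
      ((hasDerivAt_id p.1).prodMk (hasDerivAt_const p.1 p.2))
  have h2 : HasDerivAt (fun x => u (p.1, x)) (fderiv ℝ u p (0, 1)) p.2 :=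
    HasFDerivAt.comp_hasDerivAt (f := fun x : ℝ => (p.1, x)) p.2 h.hasFDerivAt
      ((hasDerivAt_const p.2 p.1).prodMk (hasDerivAt_id p.2))
  rw [h1.deriv, h2.deriv]
  have : ((a, b) : ℝ × ℝ) = a • (1, 0) + b • (0, 1) := by simp
  rw [this, map_add, map_smul, map_smul, smul_eq_mul, smul_eq_mul]

/-- The determinant of the 2×2 matrix obtained from a 3×3 matrix `s` by deleting
row `i` and column `j`. -/
noncomputable def minor3 (s : Matrix (Fin 3) (Fin 3) ℝ) (i j : Fin 3) : ℝ :=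
  (s.submatrix i.succAbove j.succAbove).det

/-- The graph `{(t, x, u (t, x)) : (t, x) ∈ D}` of a function `u` over `D ⊆ ℝ²`. -/
def burgersGraph (D : Set (ℝ × ℝ)) (u : ℝ × ℝ → ℝ) : Set (ℝ × ℝ × ℝ) :=
  (fun p : ℝ × ℝ => (p.1, p.2, u p)) '' D

/-- The projective transformation of `ℝ³` induced by the matrix `s`. -/
noncomputable def projPhi (s : Matrix (Fin 3) (Fin 3) ℝ) (p : ℝ × ℝ × ℝ) : ℝ × ℝ × ℝ :=
  ((s 0 0 * p.1 + s 0 1 * p.2.1 + s 0 2) / (s 2 0 * p.1 + s 2 1 * p.2.1 + s 2 2),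
   (s 1 0 * p.1 + s 1 1 * p.2.1 + s 1 2) / (s 2 0 * p.1 + s 2 1 * p.2.1 + s 2 2),
   ((-(minor3 s 0 2) * p.1 + minor3 s 0 0) * p.2.2 + (minor3 s 0 2 * p.2.1 + minor3 s 0 1)) /
     ((-(minor3 s 1 2) * p.1 + minor3 s 1 0) * p.2.2 + (minor3 s 1 2 * p.2.1 + minor3 s 1 1)))

/-- The open set where both denominators of `projPhi s` are nonzero. -/
def projPhiDom (s : Matrix (Fin 3) (Fin 3) ℝ) : Set (ℝ × ℝ × ℝ) :=
  {p | s 2 0 * p.1 + s 2 1 * p.2.1 + s 2 2 ≠ 0 ∧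
    (-(minor3 s 1 2) * p.1 + minor3 s 1 0) * p.2.2 +
      (minor3 s 1 2 * p.2.1 + minor3 s 1 1) ≠ 0}

theorem stmt1
    (s : Matrix (Fin 3) (Fin 3) ℝ) (hs : IsUnit s.det)
    (D D' : Set (ℝ × ℝ)) (hD : IsOpen D) (hD' : IsOpen D')
    (u : ℝ × ℝ → ℝ) (hu : ContDiffOn ℝ 1 u D)
    (husol : ∀ p ∈ D,
      deriv (fun t => u (t, p.2)) p.1 + u p * deriv (fun x => u (p.1, x)) p.2 = 0)
    (hgraph : burgersGraph D u ⊆ projPhiDom s)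
    (u' : ℝ × ℝ → ℝ) (hu' : ContDiffOn ℝ 1 u' D')
    (himage : projPhi s '' burgersGraph D u = burgersGraph D' u') :
    ∀ p ∈ D',
      deriv (fun t => u' (t, p.2)) p.1 + u' p * deriv (fun x => u' (p.1, x)) p.2 = 0 := by
  intro q hq
  have hq1 : ((q.1, q.2, u' q) : ℝ × ℝ × ℝ) ∈ projPhi s '' burgersGraph D u := by
    rw [himage]; exact ⟨q, hq, rfl⟩
  obtain ⟨_, ⟨p, hp, rfl⟩, hpq⟩ := hq1
  have hdom := hgraph ⟨p, hp, rfl⟩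
  obtain ⟨hC, hM⟩ := hdom
  have hud : DifferentiableAt ℝ u p :=
    (hu.contDiffAt (hD.mem_nhds hp)).differentiableAt one_ne_zero
  have hud' : DifferentiableAt ℝ u' q :=
    (hu'.contDiffAt (hD'.mem_nhds hq)).differentiableAt one_ne_zero
  obtain ⟨t, x⟩ := p
  set v := u (t, x) with hv
  simp only [projPhi, Prod.mk.injEq] at hpq hC hM
  obtain ⟨hq1, hq2, hq3⟩ := hpq
  rw [← hv] at hM hq3
  have hT : HasDerivAt (fun r : ℝ => t + r) 1 0 := by
    simpa using (hasDerivAt_id (0:ℝ)).const_add t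
  have hX : HasDerivAt (fun r : ℝ => x + r * v) v 0 := by
    simpa using ((hasDerivAt_id (0:ℝ)).mul_const v).const_add x
  have hH : HasDerivAt (fun r : ℝ => u (t + r, x + r * v)) 0 0 := by
    have h0 : HasFDerivAt u (fderiv ℝ u (t, x)) ((fun r : ℝ => (t + r, x + r * v)) 0) := by
      simpa using hud.hasFDerivAt
    have := h0.comp_hasDerivAt (f := fun r : ℝ => (t + r, x + r * v)) 0 (hT.prodMk hX)
    rw [burgers_partials u (t, x) hud, one_mul, husol _ hp] at this
    exact this
  have hlin : ∀ a b c : ℝ, HasDerivAt (fun r : ℝ => a * (t + r) + b * (x + r * v) + c)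
      (a * 1 + b * v) 0 := fun a b c => ((hT.const_mul a).add (hX.const_mul b)).add_const c
  have hfr : ∀ a b c : ℝ, HasDerivAt (fun r : ℝ =>
      (-a * (t + r) + b) * u (t + r, x + r * v) + (a * (x + r * v) + c)) 0 0 := by
    intro a b c
    have := (((hT.const_mul (-a)).add_const b).mul hH).add ((hX.const_mul a).add_const c)
    refine this.congr_deriv ?_
    simp [← hv]
  have hA := (hlin (s 0 0) (s 0 1) (s 0 2)).div (hlin (s 2 0) (s 2 1) (s 2 2)) (by simpa using hC)
  have hB := (hlin (s 1 0) (s 1 1) (s 1 2)).div (hlin (s 2 0) (s 2 1) (s 2 2)) (by simpa using hC)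
  have hW := (hfr (minor3 s 0 2) (minor3 s 0 0) (minor3 s 0 1)).div
    (hfr (minor3 s 1 2) (minor3 s 1 0) (minor3 s 1 1)) (by simpa [← hv] using hM)
  have hF := hA.prodMk hB
  have hU := hud'.hasFDerivAt.comp_hasDerivAt_of_eq 0 hF (by
    refine Prod.ext ?_ ?_
    · simp [← hq1]
    · simp [← hq2])
  have hev : ∀ᶠ r : ℝ in nhds 0, (t + r, x + r * v) ∈ D := by
    have hc : ContinuousAt (fun r : ℝ => (t + r, x + r * v)) 0 := (hT.prodMk hX).continuousAt
    exact hc.eventually_mem (hD.mem_nhds (by simpa using hp))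
  have hEq := hU.unique (hW.congr_of_eventuallyEq (by
    filter_upwards [hev] with r hr
    have hm : projPhi s (t + r, x + r * v, u (t + r, x + r * v)) ∈ burgersGraph D' u' := by
      rw [← himage]; exact ⟨_, ⟨_, hr, rfl⟩, rfl⟩
    obtain ⟨⟨a, b⟩, -, hab⟩ := hm
    simp only [projPhi, Prod.mk.injEq] at hab
    obtain ⟨rfl, rfl, h3⟩ := hab
    exact h3))
  rw [burgers_partials u' q hud'] at hEq
  simp only [add_zero, zero_mul, mul_zero, sub_zero, zero_div, mul_one] at hEq
  rw [← hq3]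
  generalize deriv (fun t => u' (t, q.2)) q.1 = P at *
  generalize deriv (fun x => u' (q.1, x)) q.2 = Q at *
  have m : ∀ i j, minor3 s i j = s (i.succAbove 0) (j.succAbove 0) * s (i.succAbove 1) (j.succAbove 1)
      - s (i.succAbove 0) (j.succAbove 1) * s (i.succAbove 1) (j.succAbove 0) := by
    intro i j; simp [minor3, Matrix.det_fin_two]
  have m00 : minor3 s 0 0 = s 1 1 * s 2 2 - s 1 2 * s 2 1 := m 0 0
  have m01 : minor3 s 0 1 = s 1 0 * s 2 2 - s 1 2 * s 2 0 := m 0 1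
  have m02 : minor3 s 0 2 = s 1 0 * s 2 1 - s 1 1 * s 2 0 := m 0 2
  have m10 : minor3 s 1 0 = s 0 1 * s 2 2 - s 0 2 * s 2 1 := m 1 0
  have m11 : minor3 s 1 1 = s 0 0 * s 2 2 - s 0 2 * s 2 0 := m 1 1
  have m12 : minor3 s 1 2 = s 0 0 * s 2 1 - s 0 1 * s 2 0 := m 1 2
  set M := (-minor3 s 1 2 * t + minor3 s 1 0) * v + (minor3 s 1 2 * x + minor3 s 1 1) with hMd
  set N := (-minor3 s 0 2 * t + minor3 s 0 0) * v + (minor3 s 0 2 * x + minor3 s 0 1) with hNd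
  set C := s 2 0 * t + s 2 1 * x + s 2 2 with hCd
  have e1 : (s 0 0 + s 0 1 * v) * C - (s 0 0 * t + s 0 1 * x + s 0 2) * (s 2 0 + s 2 1 * v) = M := by
    rw [hMd, m10, m11, m12, hCd]; ring
  have e2 : (s 1 0 + s 1 1 * v) * C - (s 1 0 * t + s 1 1 * x + s 1 2) * (s 2 0 + s 2 1 * v) = N := by
    rw [hNd, m00, m01, m02, hCd]; ring
  rw [e1, e2] at hEq
  field_simp at hEq ⊢
  linarith
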